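/- Let S, W ∈ Sp(2N,ℝ). Then the matrix (SᵀS − WᵀS)·J is skew-symmetric if and only if SᵀS − (SᵀS)⁻¹ = SᵀW − (SᵀW)⁻¹. Consequently, the critical point condition for the cost function 𝒥(S) = Tr[(S − W)ᵀ(S − W)] on Sp(2N,ℝ), namely that Tr[(SᵀS − WᵀS)·J·Y] = 0 for all symmetric Y, is equivalent to the equation SᵀS − (SᵀS)⁻¹ = SᵀW − (SᵀW)⁻¹. -/

import Mathlib

open Matrix

/-- `J` denotes the 2N×2N real matrix with block form [[0, I_N], [−I_N, 0]]. -/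
noncomputable def J (N : ℕ) : Matrix (Fin N ⊕ Fin N) (Fin N ⊕ Fin N) ℝ :=
  Matrix.fromBlocks 0 1 (-1) 0

lemma J_sq_aux (N : ℕ) : J N * J N = -1 := by
  simp [_root_.J, Matrix.fromBlocks_multiply, ← Matrix.fromBlocks_one, Matrix.fromBlocks_neg]

lemma J_tr_aux (N : ℕ) : (J N)ᵀ = -J N := by
  simp [_root_.J, Matrix.fromBlocks_transpose, Matrix.fromBlocks_neg]

lemma left_inv_aux (N : ℕ) (A : Matrix (Fin N ⊕ Fin N) (Fin N ⊕ Fin N) ℝ)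
    (hA : Aᵀ * J N * A = J N) : (-(J N * Aᵀ * J N)) * A = 1 := by
  have : J N * (Aᵀ * J N * A) = -1 := by rw [hA, J_sq_aux]
  rw [Matrix.neg_mul, show J N * Aᵀ * J N * A = J N * (Aᵀ * J N * A) by
    simp only [Matrix.mul_assoc], this, neg_neg]

lemma inv_aux (N : ℕ) (A : Matrix (Fin N ⊕ Fin N) (Fin N ⊕ Fin N) ℝ)
    (hA : Aᵀ * J N * A = J N) : A⁻¹ = -(J N * Aᵀ * J N) :=
  Matrix.inv_eq_left_inv (left_inv_aux N A hA)

lemma tr_symp_aux (N : ℕ) (A : Matrix (Fin N ⊕ Fin N) (Fin N ⊕ Fin N) ℝ)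
    (hA : Aᵀ * J N * A = J N) : A * J N * Aᵀ = J N := by
  have h := mul_eq_one_comm.mp (left_inv_aux N A hA)
  have h2 : A * (-(J N * Aᵀ * J N)) * J N = A * J N * Aᵀ := by
    have : A * (-(J N * Aᵀ * J N)) * J N = -(A * J N * Aᵀ * (J N * J N)) := by
      simp only [Matrix.mul_assoc, Matrix.mul_neg, Matrix.neg_mul]
    rw [this, J_sq_aux]; simp
  rw [← h2, h, Matrix.one_mul]

lemma trace_aux {n : Type*} [Fintype n] (K : Matrix n n ℝ) :
    (∀ Y : Matrix n n ℝ, Yᵀ = Y → (K * Y).trace = 0) ↔ Kᵀ = -K := by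
  constructor
  · intro h
    have h1 := h (K + Kᵀ) (by simp [add_comm])
    have h2 : (Kᵀ * (K + Kᵀ)).trace = 0 := by
      rw [← Matrix.trace_transpose, Matrix.transpose_mul, Matrix.trace_mul_comm]
      simpa [add_comm] using h1
    have h3 : ((K + Kᵀ)ᴴ * (K + Kᵀ)).trace = 0 := by
      rw [Matrix.conjTranspose_eq_transpose_of_trivial]
      have : (K + Kᵀ)ᵀ = K + Kᵀ := by simp [add_comm]
      rw [this, Matrix.add_mul K, Matrix.trace_add, h1, h2, add_zero]
    have h4 := Matrix.trace_conjTranspose_mul_self_eq_zero_iff.mp h3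
    exact eq_neg_of_add_eq_zero_right h4
  · intro h Y hY
    have h1 : (K * Y).trace = -(K * Y).trace := by
      conv_lhs => rw [← Matrix.trace_transpose, Matrix.transpose_mul, hY, h, Matrix.mul_neg,
        Matrix.trace_neg, Matrix.trace_mul_comm]
    linarith

/-- For symplectic `S`, `W`: the matrix `(SᵀS − WᵀS)·J` is skew-symmetric iff
`SᵀS − (SᵀS)⁻¹ = SᵀW − (SᵀW)⁻¹`; consequently the first-order criticality condition
`Tr[(SᵀS − WᵀS)·J·Y] = 0` for all symmetric `Y` is equivalent to the same equation. -/
theorem stmt_9 (N : ℕ) (S W : Matrix (Fin N ⊕ Fin N) (Fin N ⊕ Fin N) ℝ)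
    (hS : Sᵀ * J N * S = J N) (hW : Wᵀ * J N * W = J N) :
    (((Sᵀ * S - Wᵀ * S) * J N)ᵀ = -((Sᵀ * S - Wᵀ * S) * J N) ↔
      Sᵀ * S - (Sᵀ * S)⁻¹ = Sᵀ * W - (Sᵀ * W)⁻¹) ∧
    ((∀ Y : Matrix (Fin N ⊕ Fin N) (Fin N ⊕ Fin N) ℝ, Yᵀ = Y →
        ((Sᵀ * S - Wᵀ * S) * J N * Y).trace = 0) ↔
      Sᵀ * S - (Sᵀ * S)⁻¹ = Sᵀ * W - (Sᵀ * W)⁻¹) := by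
  have hS' := tr_symp_aux N S hS
  have i1 : (Sᵀ * S)⁻¹ = -(J N * (Sᵀ * S) * J N) := by
    have := inv_aux N (Sᵀ * S) (by
      rw [Matrix.transpose_mul, Matrix.transpose_transpose,
        show Sᵀ * S * J N * (Sᵀ * S) = Sᵀ * (S * J N * Sᵀ) * S by simp only [Matrix.mul_assoc],
        hS', hS])
    rwa [Matrix.transpose_mul, Matrix.transpose_transpose] at this
  have i2 : (Sᵀ * W)⁻¹ = -(J N * (Wᵀ * S) * J N) := by
    have := inv_aux N (Sᵀ * W) (by
      rw [Matrix.transpose_mul, Matrix.transpose_transpose,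
        show Wᵀ * S * J N * (Sᵀ * W) = Wᵀ * (S * J N * Sᵀ) * W by simp only [Matrix.mul_assoc],
        hS', hW])
    rwa [Matrix.transpose_mul, Matrix.transpose_transpose] at this
  have key : ((Sᵀ * S - Wᵀ * S) * J N)ᵀ = -((Sᵀ * S - Wᵀ * S) * J N) ↔
      Sᵀ * S - (Sᵀ * S)⁻¹ = Sᵀ * W - (Sᵀ * W)⁻¹ := by
    have hT : (Sᵀ * S - Wᵀ * S)ᵀ = Sᵀ * S - Sᵀ * W := by
      simp [Matrix.transpose_sub, Matrix.transpose_mul]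
    have e : Sᵀ * S - (Sᵀ * S)⁻¹ = Sᵀ * W - (Sᵀ * W)⁻¹ ↔
        Sᵀ * S - Sᵀ * W = -(J N * ((Sᵀ * S - Wᵀ * S) * J N)) := by
      have : -(J N * ((Sᵀ * S - Wᵀ * S) * J N)) = (Sᵀ * S)⁻¹ - (Sᵀ * W)⁻¹ := by
        rw [i1, i2, ← Matrix.mul_assoc, Matrix.mul_sub, Matrix.sub_mul]; abel
      rw [this, sub_eq_sub_iff_add_eq_add, sub_eq_sub_iff_add_eq_add, add_comm (Sᵀ * W)]
    rw [e, Matrix.transpose_mul, hT, J_tr_aux, Matrix.neg_mul, neg_inj]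
    have jj : ∀ X : Matrix (Fin N ⊕ Fin N) (Fin N ⊕ Fin N) ℝ, J N * (J N * X) = -X := by
      intro X
      rw [← Matrix.mul_assoc, J_sq_aux, Matrix.neg_mul, Matrix.one_mul]
    constructor
    · intro h
      rw [← h, jj, neg_neg]
    · intro h
      rw [h, Matrix.mul_neg, jj, neg_neg]
  exact ⟨key, (trace_aux _).trans key⟩
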